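/- arXiv:0809.0105 — 4 statements merged into one kernel-verified Lean document; each statement's English description precedes it below -/
import Mathlib

section
/- Let (X, f, x₀) be a minimal counting system, α an infinite type, and # the unique iterator for (X, f, x₀) on α. Then the following are equivalent: (1) (X, f, x₀) is standard; (2) the iterator # is complete; (3) every finite set is #-regular, i.e., for every A : Finset α and every proper subset B ⊊ A one has #(B) ≠ #(A); (4) X is not a finite type. -/
/-!
An iterator satisfies `it A = f^[A.card] x₀`, and by minimality the orbit map `n ↦ f^[n] x₀` is
onto `X`. Each of the four conditions is equivalent to injectivity of the orbit map: standardness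
by cancelling `f`; completeness and regularity because an infinite type has finite subsets of every
cardinality; and infinitude because a coincidence `f^[m] x₀ = f^[n] x₀` with `m < n` confines the
whole orbit to its first `n` terms.
-/

open Function Set

section Orbit

variable {X : Type*} {f : X → X} {x : X}

theorem surjective_iterate_of_minimal
    (hmin : ∀ S : Set X, x ∈ S → (∀ y ∈ S, f y ∈ S) → S = univ) :
    Surjective (f^[·] x) := by
  refine range_eq_univ.mp (hmin _ ⟨0, rfl⟩ ?_)
  rintro _ ⟨n, rfl⟩
  exact ⟨n + 1, iterate_succ_apply' f n x⟩

theorem injective_iterate_of_notMem_range (hf : Injective f) (hx : x ∉ range f) :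
    Injective (f^[·] x) := by
  refine Injective.of_lt_imp_ne fun m n hmn heq ↦ hx ?_
  have hperiod : IsPeriodicPt f (n - m) x := iterate_cancel hf heq.symm
  exact periodicPts_subset_range (mk_mem_periodicPts (Nat.sub_pos_of_lt hmn) hperiod)

theorem notMem_range_of_injective_iterate (hsurj : Surjective (f^[·] x))
    (hinj : Injective (f^[·] x)) : x ∉ range f := by
  rintro ⟨y, hy⟩
  obtain ⟨n, rfl⟩ := hsurj y
  have hperiod : f^[n + 1] x = f^[0] x := (iterate_succ_apply' f n x).trans hy
  exact n.succ_ne_zero (hinj hperiod)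

theorem injective_of_injective_iterate (hsurj : Surjective (f^[·] x))
    (hinj : Injective (f^[·] x)) : Injective f := by
  intro y z hyz
  obtain ⟨m, rfl⟩ := hsurj y
  obtain ⟨n, rfl⟩ := hsurj z
  have hsucc : f^[m + 1] x = f^[n + 1] x := by simpa only [iterate_succ_apply'] using hyz
  rw [Nat.succ_injective (hinj hsucc)]

theorem standard_iff_injective_iterate (hsurj : Surjective (f^[·] x)) :
    (Injective f ∧ x ∉ range f) ↔ Injective (f^[·] x) :=
  ⟨fun h ↦ injective_iterate_of_notMem_range h.1 h.2, fun h ↦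
    ⟨injective_of_injective_iterate hsurj h, notMem_range_of_injective_iterate hsurj h⟩⟩

theorem range_iterate_subset_image_Iio {m n : ℕ} (hmn : m < n) (heq : f^[m] x = f^[n] x) :
    range (f^[·] x) ⊆ (f^[·] x) '' Iio n := by
  rintro _ ⟨k, rfl⟩
  induction k with
  | zero => exact ⟨0, m.zero_le.trans_lt hmn, rfl⟩
  | succ k ih =>
    obtain ⟨j, hj, hjk⟩ := ih
    have hsucc : f^[j + 1] x = f^[k + 1] x := by
      simpa only [iterate_succ_apply'] using congrArg f hjk
    rcases (Nat.succ_le_of_lt hj).lt_or_eq with hlt | rfl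
    · exact ⟨j + 1, hlt, hsucc⟩
    · exact ⟨m, hmn, heq.trans hsucc⟩

theorem infinite_range_iterate_iff : (range (f^[·] x)).Infinite ↔ Injective (f^[·] x) := by
  refine ⟨fun hinf ↦ Injective.of_lt_imp_ne fun m n hmn heq ↦ hinf ?_, infinite_range_of_injective⟩
  exact ((finite_Iio n).image _).subset (range_iterate_subset_image_Iio hmn heq)

theorem not_finite_iff_injective_iterate (hsurj : Surjective (f^[·] x)) :
    ¬ Finite X ↔ Injective (f^[·] x) := by
  rw [← infinite_range_iterate_iff, hsurj.range_eq, infinite_univ_iff, not_finite_iff_infinite]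

theorem iterator_eq_iterate_card {α : Type*} [DecidableEq α] {it : Finset α → X} (h0 : it ∅ = x)
    (h1 : ∀ (A : Finset α) (a : α), a ∉ A → it (insert a A) = f (it A)) (A : Finset α) :
    it A = f^[A.card] x := by
  induction A using Finset.induction_on with
  | empty => exact h0
  | insert a A ha ih =>
    rw [h1 A a ha, ih, Finset.card_insert_of_notMem ha, iterate_succ_apply']

end Orbit

section Card

variable {X α : Type*} [Infinite α] {g : ℕ → X}

theorem complete_iff_injective :
    (∀ A B : Finset α, g B.card = g A.card → Nonempty (A ≃ B)) ↔ Injective g := by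
  refine ⟨fun hcomplete m n hmn ↦ ?_, fun hg A B hAB ↦ ⟨Finset.equivOfCardEq (hg hAB).symm⟩⟩
  obtain ⟨A, rfl⟩ := Infinite.exists_subset_card_eq α m
  obtain ⟨B, rfl⟩ := Infinite.exists_subset_card_eq α n
  obtain ⟨e⟩ := hcomplete A B hmn.symm
  exact Finset.card_eq_of_equiv e

theorem regular_iff_injective :
    (∀ A B : Finset α, B ⊂ A → g B.card ≠ g A.card) ↔ Injective g := by
  refine ⟨fun hregular ↦ Injective.of_lt_imp_ne fun m n hmn ↦ ?_,
    fun hg A B hBA ↦ hg.ne (Finset.card_lt_card hBA).ne⟩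
  obtain ⟨A, rfl⟩ := Infinite.exists_subset_card_eq α n
  obtain ⟨B, hBA, rfl⟩ := Finset.exists_subset_card_eq hmn.le
  exact hregular A B (hBA.ssubset_of_ne (ne_of_apply_ne Finset.card hmn.ne))

end Card

/-- For a minimal counting system `(X, f, x₀)` with unique iterator `it` on an infinite
type `α`, the following are equivalent: (1) `(X, f, x₀)` is standard; (2) `it` is
complete; (3) every finite set is `it`-regular (proper subsets have different iterator
values); (4) `X` is not a finite type. -/
theorem minimal_tfae {X : Type*} (f : X → X) (x₀ : X)
    (hmin : ∀ S : Set X, x₀ ∈ S → (∀ x ∈ S, f x ∈ S) → S = Set.univ)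
    {α : Type*} [DecidableEq α] [Infinite α] (it : Finset α → X)
    (h0 : it ∅ = x₀)
    (h1 : ∀ (A : Finset α) (a : α), a ∉ A → it (insert a A) = f (it A)) :
    List.TFAE
      [Function.Injective f ∧ x₀ ∉ Set.range f,
       ∀ A B : Finset α, it B = it A → Nonempty (A ≃ B),
       ∀ A B : Finset α, B ⊂ A → it B ≠ it A,
       ¬ Finite X] := by
  have hsurj := surjective_iterate_of_minimal hmin
  have hstandard := standard_iff_injective_iterate hsurj
  obtain rfl : it = fun A ↦ f^[A.card] x₀ := funext (iterator_eq_iterate_card h0 h1)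
  tfae_have 1 ↔ 2 := hstandard.trans complete_iff_injective.symm
  tfae_have 1 ↔ 3 := hstandard.trans regular_iff_injective.symm
  tfae_have 1 ↔ 4 := hstandard.trans (not_finite_iff_injective_iterate hsurj).symm
  tfae_finish
end

section
/- Let (X, f, x₀) be a minimal counting system with X a finite type and let z be its end-point. Then: (1) if f(z) = x₀ then f is bijective (and in particular x₀ is in the range of f); (2) if f(z) ≠ x₀ then f is not injective and x₀ is not in the range of f. -/
/-!
Iterating `f` from `x₀` reaches every point no later than its first visit to `z`. If `f y = x₀`
with `y` visited strictly before `z`, the orbit would be periodic with a period short enough to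
force an earlier visit to `z`. So only `z` can be mapped to `x₀`; and by minimality `f` is
surjective as soon as `x₀` is in its range.
-/

open Function

namespace CountingSystem

variable {X : Type*} {f : X → X} {x₀ y z : X}

/-- Minimality of the counting system `(X, f, x₀)`, given unbundled by `f` and `x₀`: induction from
`x₀` along `f` is valid. -/
def IsMinimal (f : X → X) (x₀ : X) : Prop :=
  ∀ S : Set X, x₀ ∈ S → (∀ x ∈ S, f x ∈ S) → S = Set.univ

/-- `z`-minimality of the counting system `(X, f, x₀)`: induction from `x₀` along `f` is valid even
if the step at `z` is omitted. This is the property defining the end-point of a finite minimal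
counting system. -/
def IsMinimalAt (f : X → X) (x₀ z : X) : Prop :=
  ∀ Y : Set X, x₀ ∈ Y → (∀ x ∈ Y \ {z}, f x ∈ Y) → Y = Set.univ

theorem IsMinimal.exists_iterate_eq (h : IsMinimal f x₀) (x : X) : ∃ n, f^[n] x₀ = x := by
  have horbit : Set.range (fun n ↦ f^[n] x₀) = Set.univ := by
    refine h _ ⟨0, rfl⟩ ?_
    rintro _ ⟨n, rfl⟩
    exact ⟨n + 1, iterate_succ_apply' f n x₀⟩
  exact Set.range_eq_univ.mp horbit x

theorem IsMinimal.surjective_iff (h : IsMinimal f x₀) : Surjective f ↔ x₀ ∈ Set.range f :=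
  ⟨fun hf ↦ hf x₀, fun hx₀ ↦ Set.range_eq_univ.mp (h _ hx₀ fun x _ ↦ Set.mem_range_self x)⟩

theorem IsMinimalAt.isMinimal (h : IsMinimalAt f x₀ z) : IsMinimal f x₀ :=
  fun S hx₀ hS ↦ h S hx₀ fun x hx ↦ hS x hx.1

theorem IsMinimalAt.exists_le_iterate_eq (h : IsMinimalAt f x₀ z) {n : ℕ} (hn : f^[n] x₀ = z)
    (x : X) : ∃ i ≤ n, f^[i] x₀ = x := by
  have hsegment : (fun i ↦ f^[i] x₀) '' Set.Iic n = Set.univ := by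
    refine h _ ⟨0, n.zero_le, rfl⟩ ?_
    rintro _ ⟨⟨i, hi, rfl⟩, hiz⟩
    have hin : i ≠ n := fun hin ↦ hiz (hin ▸ hn)
    exact ⟨i + 1, lt_of_le_of_ne hi hin, iterate_succ_apply' f i x₀⟩
  exact Set.eq_univ_iff_forall.mp hsegment x

theorem IsMinimalAt.eq_of_map_eq (h : IsMinimalAt f x₀ z) (hy : f y = x₀) : y = z := by
  classical
  have hvisit : ∃ n, f^[n] x₀ = z := h.isMinimal.exists_iterate_eq z
  have hn : f^[Nat.find hvisit] x₀ = z := Nat.find_spec hvisit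
  obtain ⟨i, hi, rfl⟩ := h.exists_le_iterate_eq hn y
  obtain hlt | rfl := hi.lt_or_eq
  · have hperiod : IsPeriodicPt f (i + 1) x₀ := (iterate_succ_apply' f i x₀).trans hy
    have hmod : f^[Nat.find hvisit % (i + 1)] x₀ = z := (hperiod.iterate_mod_apply _).trans hn
    have hearlier : Nat.find hvisit % (i + 1) < Nat.find hvisit :=
      (Nat.mod_lt _ i.succ_pos).trans_le hlt
    exact absurd hmod (Nat.find_min hvisit hearlier)
  · exact hn

theorem IsMinimalAt.mem_range_iff (h : IsMinimalAt f x₀ z) : x₀ ∈ Set.range f ↔ f z = x₀ :=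
  ⟨fun ⟨_, hy⟩ ↦ h.eq_of_map_eq hy ▸ hy, fun hz ↦ ⟨z, hz⟩⟩

end CountingSystem

/-- Let `(X, f, x₀)` be a minimal counting system with `X` finite and end-point `z`.
If `f z = x₀` then `f` is bijective (so `x₀` is in the range of `f`); if `f z ≠ x₀`
then `f` is not injective and `x₀` is not in the range of `f`. -/
theorem endpoint_image_dichotomy {X : Type*} [Finite X] (f : X → X) (x₀ : X)
    (hmin : ∀ S : Set X, x₀ ∈ S → (∀ x ∈ S, f x ∈ S) → S = Set.univ)
    (z : X)
    (hz : ∀ Y : Set X, x₀ ∈ Y →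
      (∀ x ∈ Y \ ({z} : Set X), f x ∈ Y) → Y = Set.univ) :
    (f z = x₀ → Function.Bijective f ∧ x₀ ∈ Set.range f) ∧
      (f z ≠ x₀ → ¬ Function.Injective f ∧ x₀ ∉ Set.range f) := by
  have hrange : x₀ ∈ Set.range f ↔ f z = x₀ := CountingSystem.IsMinimalAt.mem_range_iff hz
  have hsurj : Surjective f ↔ x₀ ∈ Set.range f := CountingSystem.IsMinimal.surjective_iff hmin
  have hinj : Injective f ↔ x₀ ∈ Set.range f := Finite.injective_iff_surjective.trans hsurj
  rw [← hrange, ne_eq, ← hrange]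
  exact ⟨fun h ↦ ⟨⟨hinj.mpr h, hsurj.mpr h⟩, h⟩, fun h ↦ ⟨mt hinj.mp h, h⟩⟩
end

section
/- Let (X, f, x₀) be a minimal counting system with X a finite type and let z be its end-point. Then f(x) ≠ x for every x ∈ X with x ≠ z; that is, z is the only possible fixed point of f. -/
/-!
By induction stopping at the end-point `z`, every point reaches `z` under iteration of `f`: the
base point does because its forward orbit is everything, and if `y ≠ z` reaches `z` then it does
so after at least one step, so `f y` reaches `z` as well. A fixed point reaches only itself.
-/

open Function Set

/-- Minimality of the counting system `(X, f, x₀)`, given by its map and base point: the induction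
principle for `X`. -/
def IsMinimalCountingSystem {X : Type*} (f : X → X) (x₀ : X) : Prop :=
  ∀ S : Set X, x₀ ∈ S → MapsTo f S S → S = univ

/-- `z`-minimality of the counting system `(X, f, x₀)`: an induction principle whose step need not
be checked at `z`. It is the property characterising the end-point `z`. -/
def IsEndMinimalCountingSystem {X : Type*} (f : X → X) (x₀ z : X) : Prop :=
  ∀ Y : Set X, x₀ ∈ Y → MapsTo f (Y \ {z}) Y → Y = univ

section

variable {X : Type*} {f : X → X} {x₀ z : X}

theorem IsMinimalCountingSystem.exists_iterate_eq (h : IsMinimalCountingSystem f x₀) (x : X) :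
    ∃ n, f^[n] x₀ = x := by
  have orbit_eq_univ : range (fun n ↦ f^[n] x₀) = univ := by
    refine h _ ⟨0, rfl⟩ ?_
    rintro _ ⟨n, rfl⟩
    exact ⟨n + 1, iterate_succ_apply' f n x₀⟩
  exact range_eq_univ.mp orbit_eq_univ x

namespace IsEndMinimalCountingSystem

theorem isMinimalCountingSystem (h : IsEndMinimalCountingSystem f x₀ z) :
    IsMinimalCountingSystem f x₀ :=
  fun S hx₀ hS ↦ h S hx₀ (hS.mono_left sdiff_subset)

theorem exists_iterate_eq_end (h : IsEndMinimalCountingSystem f x₀ z) (x : X) :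
    ∃ n, f^[n] x = z := by
  have reaches_eq_univ : {y | ∃ n, f^[n] y = z} = univ := by
    refine h _ (h.isMinimalCountingSystem.exists_iterate_eq z) ?_
    rintro y ⟨⟨_ | n, hn⟩, hyz⟩
    · exact absurd hn hyz
    · exact ⟨n, hn⟩
  exact eq_univ_iff_forall.mp reaches_eq_univ x

theorem eq_end_of_isFixedPt (h : IsEndMinimalCountingSystem f x₀ z) {x : X}
    (hx : IsFixedPt f x) : x = z := by
  obtain ⟨n, hn⟩ := h.exists_iterate_eq_end x
  exact (hx.iterate n).eq.symm.trans hn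

end IsEndMinimalCountingSystem

end

/-- Let `(X, f, x₀)` be a minimal counting system with `X` finite and end-point `z`.
Then `f x ≠ x` for every `x ≠ z`; that is, `z` is the only possible fixed point of
`f`. -/
theorem endpoint_only_fixed_point {X : Type*} [Finite X] (f : X → X) (x₀ : X)
    (hmin : ∀ S : Set X, x₀ ∈ S → (∀ x ∈ S, f x ∈ S) → S = Set.univ)
    (z : X)
    (hz : ∀ Y : Set X, x₀ ∈ Y →
      (∀ x ∈ Y \ ({z} : Set X), f x ∈ Y) → Y = Set.univ) :
    ∀ x : X, x ≠ z → f x ≠ x := by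
  have hend : IsEndMinimalCountingSystem f x₀ z := hz
  intro x hxz hfx
  exact hxz (hend.eq_end_of_isFixedPt hfx)
end

section
/- Let (S, σ, s₀) and (T, τ, t₀) be segments such that there exists a bijection between S and T. Then there exists a unique mapping p : S → T with p(s₀) = t₀ such that τ ∘ p = p ∘ σ; moreover, this unique mapping p is a bijection and maps the end-point of (S, σ, s₀) to the end-point of (T, τ, t₀). -/
/-! A morphism is determined on the iterates of the base point, so it exists as soon as coinciding
iterates `σ^[m] s₀ = σ^[n] s₀` force `τ^[m] t₀ = τ^[n] t₀`. In a minimal system with a fixed point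
every orbit runs into that point, which is therefore the only periodic point. Hence iterates at
distinct times coincide only at the end-point, and by counting this is reached exactly from time
`|S| - 1` on. Minimality of the target makes a morphism surjective, hence bijective between
equinumerous finite types; it preserves fixed points, and these are unique. -/

open Function

section MinimalSystem

variable {S T : Type*} {σ : S → S} {s₀ z x : S} {τ : T → T} {t₀ z' : T}

/-- Minimality of the counting system `(S, σ, s₀)`: a `σ`-invariant subset containing `s₀` is the
whole type. A segment is encoded as such a system together with a point `z` satisfying
`IsFixedPt σ z`, which is then its end-point. -/
def IsMinimalSystem (σ : S → S) (s₀ : S) : Prop :=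
  ∀ Y : Set S, s₀ ∈ Y → (∀ x ∈ Y, σ x ∈ Y) → Y = Set.univ

namespace IsMinimalSystem

theorem exists_iterate_eq (h : IsMinimalSystem σ s₀) (x : S) : ∃ n, σ^[n] s₀ = x := by
  refine Set.range_eq_univ.1 (h (Set.range fun n ↦ σ^[n] s₀) ⟨0, rfl⟩ ?_) x
  rintro _ ⟨n, rfl⟩
  exact ⟨n + 1, iterate_succ_apply' σ n s₀⟩

theorem semiconj_ext (h : IsMinimalSystem σ s₀) {p q : S → T} (hp : Semiconj p σ τ)
    (hq : Semiconj q σ τ) (hpq : p s₀ = q s₀) : p = q := by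
  have huniv : {x | p x = q x} = Set.univ :=
    h _ hpq fun x (hx : p x = q x) ↦ by rw [Set.mem_ofPred_eq, hp.eq, hq.eq, hx]
  exact funext (Set.eq_univ_iff_forall.1 huniv)

theorem surjective_of_semiconj (h : IsMinimalSystem τ t₀) {p : S → T} (hp : Semiconj p σ τ)
    (hp₀ : p s₀ = t₀) : Surjective p := by
  refine Set.range_eq_univ.1 (h _ ⟨s₀, hp₀⟩ ?_)
  rintro _ ⟨x, rfl⟩
  exact ⟨σ x, hp.eq x⟩

theorem exists_semiconj_of_factorsThrough (h : IsMinimalSystem σ s₀)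
    (hfac : FactorsThrough (fun n ↦ τ^[n] t₀) (fun n ↦ σ^[n] s₀)) :
    ∃ p : S → T, p s₀ = t₀ ∧ Semiconj p σ τ := by
  have : Nonempty T := ⟨t₀⟩
  obtain ⟨p, hp⟩ := (factorsThrough_iff _).1 hfac
  have hp_iterate (n : ℕ) : p (σ^[n] s₀) = τ^[n] t₀ := (congrFun hp n).symm
  refine ⟨p, hp_iterate 0, fun x ↦ ?_⟩
  obtain ⟨n, rfl⟩ := h.exists_iterate_eq x
  rw [← iterate_succ_apply' σ, hp_iterate, hp_iterate, iterate_succ_apply']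

theorem eq_of_mem_periodicPts (h : IsMinimalSystem σ s₀) (hz : IsFixedPt σ z)
    (hx : x ∈ periodicPts σ) : x = z := by
  obtain ⟨k, hk⟩ := h.exists_iterate_eq z
  obtain ⟨m, rfl⟩ := h.exists_iterate_eq x
  have hz_periodic : z ∈ periodicPts σ := mk_mem_periodicPts one_pos (hz.isPeriodicPt 1)
  -- `σ` is injective on its periodic points, so it suffices to compare the images under `σ^[k]`.
  refine ((bijOn_periodicPts σ).injOn.iterate (bijOn_periodicPts σ).mapsTo k) hx hz_periodic ?_
  rw [← iterate_add_apply, add_comm, iterate_add_apply, hk, hz.iterate m, hz.iterate k]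

theorem iterate_eq_fixedPt_of_iterate_eq (h : IsMinimalSystem σ s₀) (hz : IsFixedPt σ z) {m n : ℕ}
    (hmn : m < n) (heq : σ^[m] s₀ = σ^[n] s₀) : σ^[m] s₀ = z := by
  refine h.eq_of_mem_periodicPts hz (mk_mem_periodicPts (Nat.sub_pos_of_lt hmn) ?_)
  rw [IsPeriodicPt, IsFixedPt, ← iterate_add_apply, Nat.sub_add_cancel hmn.le, heq]

theorem surjective_iterate_fin (h : IsMinimalSystem σ s₀) {n : ℕ}
    (hn : IsFixedPt σ (σ^[n] s₀)) : Surjective fun i : Fin (n + 1) ↦ σ^[i] s₀ := by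
  refine Set.range_eq_univ.1 (h _ ⟨0, rfl⟩ ?_)
  rintro _ ⟨i, rfl⟩
  cases i using Fin.lastCases with
  | last => exact ⟨Fin.last n, hn.eq.symm⟩
  | cast i => exact ⟨i.succ, iterate_succ_apply' σ i s₀⟩

theorem iterate_eq_fixedPt_iff_card_le (h : IsMinimalSystem σ s₀) (hz : IsFixedPt σ z) {n : ℕ} :
    σ^[n] s₀ = z ↔ Nat.card S ≤ n + 1 := by
  refine ⟨?_, fun hcard ↦ ?_⟩
  · rintro rfl
    simpa using Nat.card_le_card_of_surjective _ (h.surjective_iterate_fin hz)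
  · have : Finite S := by
      obtain ⟨k, rfl⟩ := h.exists_iterate_eq z
      exact Finite.of_surjective _ (h.surjective_iterate_fin hz)
    -- Otherwise `s₀, …, σ^[n + 1] s₀` are `n + 2` distinct points.
    by_contra hne
    have hinj : Injective fun i : Fin (n + 2) ↦ σ^[i] s₀ := by
      refine .of_lt_imp_ne fun i j hij heq ↦ hne ?_
      have hi : σ^[i] s₀ = z := h.iterate_eq_fixedPt_of_iterate_eq hz hij heq
      have hin : (i : ℕ) ≤ n := by omega
      rw [← Nat.sub_add_cancel hin, iterate_add_apply, hi, hz.iterate]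
    have hcard' : n + 2 ≤ Nat.card S := by simpa using Nat.card_le_card_of_injective _ hinj
    omega

theorem factorsThrough_iterate_of_card_le (hS : IsMinimalSystem σ s₀) (hz : IsFixedPt σ z)
    (hT : IsMinimalSystem τ t₀) (hz' : IsFixedPt τ z') (hcard : Nat.card T ≤ Nat.card S) :
    FactorsThrough (fun n ↦ τ^[n] t₀) (fun n ↦ σ^[n] s₀) := by
  have hend {n : ℕ} (hn : σ^[n] s₀ = z) : τ^[n] t₀ = z' := by
    rw [hS.iterate_eq_fixedPt_iff_card_le hz] at hn
    exact (hT.iterate_eq_fixedPt_iff_card_le hz').2 (hcard.trans hn)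
  intro m n (hmn : σ^[m] s₀ = σ^[n] s₀)
  wlog hlt : m < n generalizing m n
  · obtain rfl | hgt := (not_lt.1 hlt).eq_or_lt
    · rfl
    · exact (this hmn.symm hgt).symm
  have hm : σ^[m] s₀ = z := hS.iterate_eq_fixedPt_of_iterate_eq hz hlt hmn
  exact (hend hm).trans (hend (hmn.symm.trans hm)).symm

theorem exists_semiconj_of_card_le (hS : IsMinimalSystem σ s₀) (hz : IsFixedPt σ z)
    (hT : IsMinimalSystem τ t₀) (hz' : IsFixedPt τ z') (hcard : Nat.card T ≤ Nat.card S) :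
    ∃ p : S → T, p s₀ = t₀ ∧ Semiconj p σ τ :=
  hS.exists_semiconj_of_factorsThrough (hS.factorsThrough_iterate_of_card_le hz hT hz' hcard)

theorem map_fixedPt_eq (h : IsMinimalSystem τ t₀) {p : S → T} (hp : Semiconj p σ τ)
    (hz : IsFixedPt σ z) (hz' : IsFixedPt τ z') : p z = z' :=
  h.eq_of_mem_periodicPts hz' (mk_mem_periodicPts one_pos ((hz.map hp).isPeriodicPt 1))

end IsMinimalSystem

end MinimalSystem

/-- Let `(S, σ, s₀)` and `(T, τ, t₀)` be segments (minimal counting systems on finite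
types whose end-points `z`, `z'` are fixed points) with `S ≃ T`. Then there is a unique
map `p : S → T` with `p s₀ = t₀` and `τ ∘ p = p ∘ σ`; moreover this `p` is a bijection
sending the end-point `z` to the end-point `z'`. -/
theorem segment_unique_morphism {S : Type*} [Finite S] (σ : S → S) (s₀ : S)
    (hSmin : ∀ Y : Set S, s₀ ∈ Y → (∀ x ∈ Y, σ x ∈ Y) → Y = Set.univ)
    (z : S)
    (hSz : ∀ Y : Set S, s₀ ∈ Y → (∀ x ∈ Y \ ({z} : Set S), σ x ∈ Y) → Y = Set.univ)
    (hzfix : σ z = z)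
    {T : Type*} [Finite T] (τ : T → T) (t₀ : T)
    (hTmin : ∀ Y : Set T, t₀ ∈ Y → (∀ x ∈ Y, τ x ∈ Y) → Y = Set.univ)
    (z' : T)
    (hTz : ∀ Y : Set T, t₀ ∈ Y → (∀ x ∈ Y \ ({z'} : Set T), τ x ∈ Y) → Y = Set.univ)
    (hz'fix : τ z' = z')
    (hequiv : Nonempty (S ≃ T)) :
    (∃! p : S → T, p s₀ = t₀ ∧ τ ∘ p = p ∘ σ) ∧
      ∀ p : S → T, (p s₀ = t₀ ∧ τ ∘ p = p ∘ σ) →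
        Function.Bijective p ∧ p z = z' := by
  have hS : IsMinimalSystem σ s₀ := hSmin
  have hT : IsMinimalSystem τ t₀ := hTmin
  have hcard : Nat.card S = Nat.card T := Nat.card_congr hequiv.some
  have semiconj_iff (p : S → T) : τ ∘ p = p ∘ σ ↔ Semiconj p σ τ :=
    eq_comm.trans semiconj_iff_comp_eq.symm
  simp only [semiconj_iff]
  refine ⟨?_, fun p ⟨hp₀, hp⟩ ↦ ⟨?_, hT.map_fixedPt_eq hp hzfix hz'fix⟩⟩
  · obtain ⟨p, hp₀, hp⟩ := hS.exists_semiconj_of_card_le hzfix hT hz'fix hcard.ge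
    exact ⟨p, ⟨hp₀, hp⟩, fun q ⟨hq₀, hq⟩ ↦ hS.semiconj_ext hq hp (hq₀.trans hp₀.symm)⟩
  · exact (hT.surjective_of_semiconj hp hp₀).bijective_of_nat_card_le hcard.le
end
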